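/- Let 0<p,q≤∞ and 0<p₀<p. There exists a constant C>0, depending only on p₀,p,q, such that for every R>0 and every f∈E_R with ‖f‖_{L^{p,q}(ℝ)}<∞, the sequence a=(f(n))_{n∈ℤ} belongs to ℓ^{p,q}(ℤ) and ‖a‖_{ℓ^{p,q}(ℤ)} ≤ C·max(1,R^{1/p₀})·‖f‖_{L^{p,q}(ℝ)}. -/

import Mathlib

open MeasureTheory Complex SchwartzMap Filter
open scoped FourierTransform ENNReal NNReal Real

/-- The distribution function of an `ℝ≥0∞`-valued function. -/
noncomputable def distFn {X : Type*} [MeasurableSpace X] (μ : Measure X)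
    (f : X → ℝ≥0∞) (t : ℝ) : ℝ≥0∞ :=
  μ {x | ENNReal.ofReal t < f x}

/-- The Lorentz `L^{p,q}` quasinorm, defined via the distribution function. -/
noncomputable def lorentzNorm {X : Type*} [MeasurableSpace X] (μ : Measure X)
    (p q : ℝ≥0∞) (f : X → ℝ≥0∞) : ℝ≥0∞ :=
  if q = ∞ then ⨆ t ∈ Set.Ioi (0 : ℝ), ENNReal.ofReal t * distFn μ f t ^ (1 / p.toReal)
  else (q * ∫⁻ t in Set.Ioi (0 : ℝ),
      ENNReal.ofReal (t ^ (q.toReal - 1)) * distFn μ f t ^ (q.toReal / p.toReal)) ^ (1 / q.toReal)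

/-- The Lorentz `L^{p,q}` quasinorm of a complex-valued function. -/
noncomputable def lorentzNormC {X : Type*} [MeasurableSpace X] (μ : Measure X)
    (p q : ℝ≥0∞) (f : X → ℂ) : ℝ≥0∞ :=
  lorentzNorm μ p q fun x => (‖f x‖₊ : ℝ≥0∞)

/-- A function is locally bounded if it is bounded on every compact set. -/
def LocallyBounded (m : ℝ × ℝ → ℂ) : Prop :=
  ∀ K : Set (ℝ × ℝ), IsCompact K → ∃ C : ℝ, ∀ z ∈ K, ‖m z‖ ≤ C

/-- The bilinear multiplier operator `C_m`. -/
noncomputable def Cm (m : ℝ × ℝ → ℂ) (f g : 𝓢(ℝ, ℂ)) (x : ℝ) : ℂ :=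
  ∫ ξ : ℝ, ∫ η : ℝ, 𝓕 (f : ℝ → ℂ) ξ * 𝓕 (g : ℝ → ℂ) η * m (ξ, η) *
    Complex.exp (2 * Real.pi * Complex.I * (x : ℂ) * ((ξ : ℂ) + (η : ℂ)))

/-- The trigonometric polynomial with coefficients `a`. -/
noncomputable def trigP (a : ℤ → ℂ) (ξ : ℝ) : ℂ :=
  ∑ᶠ k : ℤ, a k * Complex.exp (-(2 * Real.pi) * Complex.I * (k : ℂ) * (ξ : ℂ))

/-- The discrete bilinear operator `D_{m̃_{t,p}}`. -/
noncomputable def Dop (m : ℝ × ℝ → ℂ) (t p : ℝ) (a b : ℤ → ℂ) (n : ℤ) : ℂ :=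
  ((t ^ (1 / p) : ℝ) : ℂ) *
    ∫ ξ in Set.Icc (-(1/2) : ℝ) (1/2), ∫ η in Set.Icc (-(1/2) : ℝ) (1/2),
      trigP a ξ * trigP b η * m (t * ξ, t * η) *
        Complex.exp (2 * Real.pi * Complex.I * (n : ℂ) * ((ξ : ℂ) + (η : ℂ)))

/-- `InER R f` : `f` is (a representative of) a tempered distribution of exponential type,
i.e. a continuous function of polynomial growth whose distributional Fourier transform is
supported in `[-R, R]`. -/
def InER (R : ℝ) (f : ℝ → ℂ) : Prop :=
  Continuous f ∧ (∃ (C : ℝ) (k : ℕ), ∀ x : ℝ, ‖f x‖ ≤ C * (1 + |x|) ^ k) ∧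
  ∀ φ : 𝓢(ℝ, ℂ), Disjoint (tsupport (φ : ℝ → ℂ)) (Set.Icc (-R) R) →
    ∫ x : ℝ, f x * 𝓕 (φ : ℝ → ℂ) x = 0

/-- The discrete bilinear Hilbert transform. -/
noncomputable def bhtZ (α : ℤ) (a b : ℤ → ℂ) (n : ℤ) : ℂ :=
  ((Real.pi : ℂ))⁻¹ * ∑ᶠ (k : ℤ) (_ : k ≠ 0), a (n - k) * b (n - α * k) * (k : ℂ)⁻¹

/-- `sinc x = sin (π x) / (π x)`, with `sinc 0 = 1`. -/
noncomputable def mySinc (x : ℝ) : ℝ :=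
  if x = 0 then 1 else Real.sin (Real.pi * x) / (Real.pi * x)

/-!
Let `r = max 1 R` and let `K` be a Schwartz function whose inverse Fourier transform is `1` on
`[-2, 2]`. Every `f ∈ E_R` is reproduced by the kernel `r K(r (z - x))`. Since the decay of `K` is
controlled by a submultiplicative weight `w`, Peetre's maximal function trick lowers the exponent:
for every `0 < s ≤ 1`, `‖f x‖ ^ s` is bounded by a positive integral operator applied to
`‖f‖ ^ s`, with kernel `r w(r (z - x)) ^ 2`. Choosing `s < p` turns the claim into the boundedness
of that operator from `L^{p/s,q/s}(ℝ)` to `ℓ^{p/s,q/s}(ℤ)` with `p/s > 1`. The row integrals of the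
kernel are bounded and its column sums over `ℤ` are at most of order `r`, so splitting the function
at the height `τ` controls the distribution function of the image at height of order `τ` by a
dyadic sum of distribution functions, and the factor `r ^ (1/p)` comes out.
-/

section LorentzGauge

lemma lintegral_comp_mul_left {b : ℝ} (hb : 0 < b) (g : ℝ → ℝ≥0∞) :
    ∫⁻ t, g t = ENNReal.ofReal b * ∫⁻ t, g (b * t) := by
  have hsubst := lintegral_image_eq_lintegral_abs_deriv_mul (s := Set.univ) (f' := fun _ => b)
    MeasurableSet.univ (fun t _ => (hasDerivAt_const_mul b).hasDerivWithinAt)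
    (mul_right_injective₀ hb.ne').injOn g
  rwa [Set.image_univ, (mul_left_surjective₀ hb.ne').range_eq, abs_of_pos hb,
    setLIntegral_univ, setLIntegral_univ,
    lintegral_const_mul' _ _ ENNReal.ofReal_ne_top] at hsubst

lemma lintegral_Ioi_comp_mul_left {b : ℝ} (hb : 0 < b) (g : ℝ → ℝ≥0∞) :
    ∫⁻ t in Set.Ioi (0 : ℝ), g t = ENNReal.ofReal b * ∫⁻ t in Set.Ioi (0 : ℝ), g (b * t) := by
  simp only [← lintegral_indicator measurableSet_Ioi]
  rw [lintegral_comp_mul_left hb]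
  simp only [Set.indicator_apply, Set.mem_Ioi, mul_pos_iff_of_pos_left hb]

lemma lintegral_Ioi_comp_rpow {s : ℝ} (hs : 0 < s) (g : ℝ → ℝ≥0∞) :
    ∫⁻ t in Set.Ioi (0 : ℝ), g t =
      ∫⁻ t in Set.Ioi (0 : ℝ), ENNReal.ofReal (s * t ^ (s - 1)) * g (t ^ s) := by
  have himage : (· ^ s) '' Set.Ioi (0 : ℝ) = Set.Ioi 0 := by
    ext t
    refine ⟨fun ⟨u, hu, hut⟩ => hut ▸ Real.rpow_pos_of_pos hu s, fun ht => ?_⟩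
    exact ⟨t ^ s⁻¹, Real.rpow_pos_of_pos ht _, Real.rpow_inv_rpow (le_of_lt ht) hs.ne'⟩
  have hinj : Set.InjOn (· ^ s) (Set.Ioi (0 : ℝ)) := fun t ht u hu htu =>
    (Real.rpow_left_inj (le_of_lt ht) (le_of_lt hu) hs.ne').1 htu
  have hsubst := lintegral_image_eq_lintegral_abs_deriv_mul (f := (· ^ s)) measurableSet_Ioi
    (fun t ht => (Real.hasDerivAt_rpow_const (p := s) (Or.inl (ne_of_gt ht))).hasDerivWithinAt)
    hinj g
  rw [himage] at hsubst
  refine hsubst.trans (setLIntegral_congr_fun measurableSet_Ioi fun t (ht : 0 < t) => ?_)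
  simp only [abs_of_pos (mul_pos hs (Real.rpow_pos_of_pos ht (s - 1)))]

/-- The Lorentz quasinorm as a functional of the distribution function alone, so that distribution
functions of functions on different measure spaces can be compared. -/
noncomputable def lorentzGauge (p q : ℝ≥0∞) (d : ℝ → ℝ≥0∞) : ℝ≥0∞ :=
  if q = ∞ then ⨆ t ∈ Set.Ioi (0 : ℝ), ENNReal.ofReal t * d t ^ (1 / p.toReal)
  else (q * ∫⁻ t in Set.Ioi (0 : ℝ),
      ENNReal.ofReal (t ^ (q.toReal - 1)) * d t ^ (q.toReal / p.toReal)) ^ (1 / q.toReal)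

variable {p q : ℝ≥0∞} {d e : ℝ → ℝ≥0∞}

lemma lorentzGauge_top_right (p : ℝ≥0∞) (d : ℝ → ℝ≥0∞) :
    lorentzGauge p ∞ d = ⨆ t ∈ Set.Ioi (0 : ℝ), ENNReal.ofReal t * d t ^ (1 / p.toReal) :=
  if_pos rfl

lemma lorentzGauge_rpow (hq : q ≠ 0) (hq' : q ≠ ∞) (p : ℝ≥0∞) (d : ℝ → ℝ≥0∞) :
    lorentzGauge p q d ^ q.toReal = q * ∫⁻ t in Set.Ioi (0 : ℝ),
      ENNReal.ofReal (t ^ (q.toReal - 1)) * d t ^ (q.toReal / p.toReal) := by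
  rw [lorentzGauge, if_neg hq', one_div, ENNReal.rpow_inv_rpow (ENNReal.toReal_pos hq hq').ne']

lemma lorentzGauge_mono (hde : ∀ t, 0 < t → d t ≤ e t) :
    lorentzGauge p q d ≤ lorentzGauge p q e := by
  unfold lorentzGauge
  split_ifs with hq
  · exact iSup₂_mono fun t ht => by gcongr; exact hde t ht
  · gcongr ((q * ?_) ^ _)
    exact setLIntegral_mono' measurableSet_Ioi fun t ht => by gcongr; exact hde t ht

lemma lorentzGauge_const_mul (hq : q ≠ 0) {A : ℝ≥0∞} (hA : A ≠ ∞) (d : ℝ → ℝ≥0∞) :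
    lorentzGauge p q (fun t => A * d t) = A ^ (1 / p.toReal) * lorentzGauge p q d := by
  rcases eq_or_ne q ∞ with rfl | hq'
  · simp only [lorentzGauge_top_right, ENNReal.mul_iSup]
    refine iSup_congr fun t => iSup_congr fun _ => ?_
    rw [ENNReal.mul_rpow_of_nonneg _ _ (by positivity), mul_left_comm]
  have hqr : 0 < q.toReal := ENNReal.toReal_pos hq hq'
  have hexp : 0 ≤ q.toReal / p.toReal := by positivity
  apply ENNReal.rpow_left_injective hqr.ne'
  beta_reduce
  rw [ENNReal.mul_rpow_of_nonneg _ _ hqr.le,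
    lorentzGauge_rpow hq hq', lorentzGauge_rpow hq hq', ← ENNReal.rpow_mul, one_div_mul_eq_div,
    mul_left_comm, ← lintegral_const_mul' _ _ (ENNReal.rpow_ne_top_of_nonneg hexp hA)]
  simp only [ENNReal.mul_rpow_of_nonneg _ _ hexp, mul_left_comm]

lemma lorentzGauge_comp_mul_left (hq : q ≠ 0) {b : ℝ} (hb : 0 < b) (d : ℝ → ℝ≥0∞) :
    lorentzGauge p q d = ENNReal.ofReal b * lorentzGauge p q (fun t => d (b * t)) := by
  rcases eq_or_ne q ∞ with rfl | hq'
  · simp only [lorentzGauge_top_right, ENNReal.mul_iSup, ← mul_assoc, ← ENNReal.ofReal_mul hb.le]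
    refine le_antisymm (iSup₂_le fun t ht => ?_) (iSup₂_le fun t ht => ?_)
    · refine le_iSup₂_of_le (b⁻¹ * t) (mul_pos (inv_pos.2 hb) ht) ?_
      rw [mul_inv_cancel_left₀ hb.ne']
    · exact le_iSup₂_of_le (b * t) (mul_pos hb ht) le_rfl
  have hqr : 0 < q.toReal := ENNReal.toReal_pos hq hq'
  apply ENNReal.rpow_left_injective hqr.ne'
  beta_reduce
  rw [ENNReal.mul_rpow_of_nonneg _ _ hqr.le,
    lorentzGauge_rpow hq hq', lorentzGauge_rpow hq hq', lintegral_Ioi_comp_mul_left hb,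
    mul_left_comm (_ ^ _), ← lintegral_const_mul' _ _ ENNReal.ofReal_ne_top,
    ← lintegral_const_mul' _ _ (ENNReal.rpow_ne_top_of_nonneg hqr.le ENNReal.ofReal_ne_top)]
  congr 1
  refine setLIntegral_congr_fun measurableSet_Ioi fun t (ht : 0 < t) => ?_
  have hpow : b * (b * t) ^ (q.toReal - 1) = b ^ q.toReal * t ^ (q.toReal - 1) := by
    rw [Real.mul_rpow hb.le ht.le, ← mul_assoc, ← Real.rpow_one_add' hb.le (by simpa using hqr.ne')]
    simp
  simp only [ENNReal.ofReal_rpow_of_pos hb, ← mul_assoc, ← ENNReal.ofReal_mul hb.le,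
    ← ENNReal.ofReal_mul (Real.rpow_nonneg hb.le _), hpow]

lemma toReal_div_ofReal (p : ℝ≥0∞) {s : ℝ} (hs : 0 ≤ s) :
    (p / ENNReal.ofReal s).toReal = p.toReal / s := by
  rw [ENNReal.toReal_div, ENNReal.toReal_ofReal hs]

lemma lorentzGauge_top_right_comp_rpow {s : ℝ} (hs : 0 < s) (d : ℝ → ℝ≥0∞) :
    lorentzGauge (p / ENNReal.ofReal s) ∞ d = lorentzGauge p ∞ (fun t => d (t ^ s)) ^ s := by
  have hterm (t : ℝ) (ht : 0 < t) : ENNReal.ofReal (t ^ s) * d (t ^ s) ^ (s / p.toReal) =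
      (ENNReal.ofReal t * d (t ^ s) ^ (1 / p.toReal)) ^ s := by
    rw [ENNReal.mul_rpow_of_nonneg _ _ hs.le, ENNReal.ofReal_rpow_of_pos ht, ← ENNReal.rpow_mul,
      one_div_mul_eq_div]
  simp only [lorentzGauge_top_right, toReal_div_ofReal p hs.le, one_div_div]
  refine le_antisymm (iSup₂_le fun t ht => ?_) ((ENNReal.le_rpow_inv_iff hs).1 ?_)
  · obtain ⟨u, hu, rfl⟩ : ∃ u : ℝ, 0 < u ∧ u ^ s = t :=
      ⟨t ^ s⁻¹, Real.rpow_pos_of_pos ht _, Real.rpow_inv_rpow (le_of_lt ht) hs.ne'⟩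
    rw [hterm u hu]
    gcongr
    exact le_iSup₂_of_le u hu le_rfl
  · refine iSup₂_le fun t ht => ?_
    rw [ENNReal.le_rpow_inv_iff hs, ← hterm t ht]
    exact le_iSup₂_of_le (t ^ s) (Real.rpow_pos_of_pos ht s) le_rfl

lemma lorentzGauge_comp_rpow (hq : q ≠ 0) {s : ℝ} (hs : 0 < s) (d : ℝ → ℝ≥0∞) :
    lorentzGauge (p / ENNReal.ofReal s) (q / ENNReal.ofReal s) d =
      lorentzGauge p q (fun t => d (t ^ s)) ^ s := by
  rcases eq_or_ne q ∞ with rfl | hq'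
  · rw [ENNReal.top_div_of_ne_top ENNReal.ofReal_ne_top, lorentzGauge_top_right_comp_rpow hs]
  have hqs : q / ENNReal.ofReal s ≠ 0 := ENNReal.div_ne_zero.2 ⟨hq, ENNReal.ofReal_ne_top⟩
  have hqs' : q / ENNReal.ofReal s ≠ ∞ := ENNReal.div_ne_top hq' (by simpa using hs)
  apply ENNReal.rpow_left_injective (ENNReal.toReal_pos hqs hqs').ne'
  beta_reduce
  rw [lorentzGauge_rpow hqs hqs',
    ← ENNReal.rpow_mul, toReal_div_ofReal _ hs.le, toReal_div_ofReal _ hs.le,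
    mul_div_cancel₀ _ hs.ne', lorentzGauge_rpow hq hq',
    div_div_div_cancel_right₀ hs.ne', lintegral_Ioi_comp_rpow hs, ENNReal.div_eq_inv_mul,
    mul_assoc, mul_left_comm, ← lintegral_const_mul' _ _ (by simpa using hs)]
  congr 1
  refine setLIntegral_congr_fun measurableSet_Ioi fun t (ht : 0 < t) => ?_
  have hpow : t ^ (s - 1) * (t ^ s) ^ (q.toReal / s - 1) = t ^ (q.toReal - 1) := by
    rw [← Real.rpow_mul ht.le, ← Real.rpow_add ht]
    congr 1
    field_simp
    ring
  rw [← mul_assoc, ← mul_assoc, ENNReal.ofReal_mul hs.le, ← mul_assoc,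
    ENNReal.inv_mul_cancel (by simpa using hs) ENNReal.ofReal_ne_top, one_mul,
    ← ENNReal.ofReal_mul (Real.rpow_nonneg ht.le _), hpow]

lemma ofReal_mul_rpow_le_lorentzGauge (hq : q ≠ 0) (hd : Antitone d) {t : ℝ} (ht : 0 < t) :
    ENNReal.ofReal t * d t ^ (1 / p.toReal) ≤ lorentzGauge p q d := by
  rcases eq_or_ne q ∞ with rfl | hq'
  · rw [lorentzGauge_top_right]
    exact le_iSup₂_of_le t ht le_rfl
  have hqr : 0 < q.toReal := ENNReal.toReal_pos hq hq'
  have hpower : q * ∫⁻ u in Set.Ioc 0 t, ENNReal.ofReal (u ^ (q.toReal - 1)) =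
      ENNReal.ofReal (t ^ q.toReal) := by
    have hint := intervalIntegral.intervalIntegrable_rpow' (a := 0) (b := t)
      (show -1 < q.toReal - 1 by linarith)
    rw [← ofReal_integral_eq_lintegral_ofReal
        ((intervalIntegrable_iff_integrableOn_Ioc_of_le ht.le).1 hint)
        (ae_restrict_of_forall_mem measurableSet_Ioc fun u hu => Real.rpow_nonneg hu.1.le _),
      ← intervalIntegral.integral_of_le ht.le, integral_rpow (Or.inl (by linarith)),
      sub_add_cancel, Real.zero_rpow hqr.ne', sub_zero]
    nth_rewrite 1 [← ENNReal.ofReal_toReal hq']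
    rw [← ENNReal.ofReal_mul hqr.le, mul_div_cancel₀ _ hqr.ne']
  rw [← ENNReal.rpow_le_rpow_iff hqr, lorentzGauge_rpow hq hq']
  calc (ENNReal.ofReal t * d t ^ (1 / p.toReal)) ^ q.toReal
      = q * ∫⁻ u in Set.Ioc 0 t,
          ENNReal.ofReal (u ^ (q.toReal - 1)) * d t ^ (q.toReal / p.toReal) := by
        rw [lintegral_mul_const _ (by fun_prop), ← mul_assoc, hpower,
          ENNReal.mul_rpow_of_nonneg _ _ hqr.le, ENNReal.ofReal_rpow_of_pos ht, ← ENNReal.rpow_mul,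
          one_div_mul_eq_div]
    _ ≤ q * ∫⁻ u in Set.Ioc 0 t,
          ENNReal.ofReal (u ^ (q.toReal - 1)) * d u ^ (q.toReal / p.toReal) := by
        gcongr q * ?_
        exact setLIntegral_mono' measurableSet_Ioc fun u hu => by gcongr; exact hd hu.2
    _ ≤ _ := by
        gcongr
        exact Set.Ioc_subset_Ioi_self

-- As `(∞ : ℝ≥0∞).toReal = 0`, the distribution function enters with exponent `0`.
lemma lorentzGauge_top_left (hq : q ≠ 0) (d : ℝ → ℝ≥0∞) : lorentzGauge ∞ q d = ∞ := by
  have hone : lorentzGauge ∞ q d = lorentzGauge ∞ q fun _ => 1 := by simp [lorentzGauge]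
  refine ENNReal.eq_top_of_forall_nnreal_le fun r => ?_
  calc (r : ℝ≥0∞) ≤ ENNReal.ofReal (r + 1) := by
        rw [← ENNReal.ofReal_coe_nnreal]
        gcongr
        linarith
    _ ≤ lorentzGauge ∞ q d := by
        simpa [hone] using ofReal_mul_rpow_le_lorentzGauge (p := ∞) hq antitone_const
          (show (0 : ℝ) < r + 1 by positivity)

lemma ennreal_iSup_rpow {ι : Type*} [Nonempty ι] {r : ℝ} (hr : 0 ≤ r) (f : ι → ℝ≥0∞) :
    (⨆ i, f i) ^ r = ⨆ i, f i ^ r :=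
  Monotone.map_ciSup_of_continuousAt ENNReal.continuous_rpow_const.continuousAt
    (ENNReal.monotone_rpow_of_nonneg hr) (OrderTop.bddAbove _)

lemma lorentzGauge_iSup_rpow_le (hq : q ≠ 0) (hq' : q ≠ ∞) {d : ℕ → ℝ → ℝ≥0∞}
    (hd : ∀ k, Measurable (d k)) :
    lorentzGauge p q (fun t => ⨆ k, d k t) ^ q.toReal ≤
      ∑' k, lorentzGauge p q (d k) ^ q.toReal := by
  simp only [lorentzGauge_rpow hq hq', ENNReal.tsum_mul_left]
  rw [← lintegral_tsum fun k => by fun_prop]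
  gcongr q * ?_
  refine lintegral_mono fun t => ?_
  rw [ennreal_iSup_rpow (by positivity), ENNReal.mul_iSup]
  exact iSup_le fun k => ENNReal.le_tsum k

lemma exists_lorentzGauge_iSup_le (hq : q ≠ 0) {θ : ℝ≥0∞} (hθ : θ < 1) :
    ∃ C : ℝ≥0∞, C ≠ ∞ ∧ ∀ (p L : ℝ≥0∞) (d : ℕ → ℝ → ℝ≥0∞), (∀ k, Measurable (d k)) →
      (∀ k, lorentzGauge p q (d k) ≤ θ ^ k * L) →
      lorentzGauge p q (fun t => ⨆ k, d k t) ≤ C * L := by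
  rcases eq_or_ne q ∞ with rfl | hq'
  · refine ⟨1, ENNReal.one_ne_top, fun p L d _ hdL => ?_⟩
    rw [lorentzGauge_top_right, one_mul]
    refine iSup₂_le fun t ht => ?_
    rw [ennreal_iSup_rpow (by positivity), ENNReal.mul_iSup]
    refine iSup_le fun k => ?_
    refine le_trans ?_ ((hdL k).trans (mul_le_of_le_one_left' (pow_le_one' hθ.le k)))
    rw [lorentzGauge_top_right]
    exact le_iSup₂_of_le t ht le_rfl
  have hqr : 0 < q.toReal := ENNReal.toReal_pos hq hq'
  refine ⟨(1 - θ ^ q.toReal)⁻¹ ^ q.toReal⁻¹, ?_, fun p L d hd hdL => ?_⟩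
  · refine ENNReal.rpow_ne_top_of_nonneg (by positivity) (ENNReal.inv_ne_top.2 ?_)
    exact (tsub_pos_of_lt (ENNReal.rpow_lt_one hθ hqr)).ne'
  rw [← ENNReal.rpow_le_rpow_iff hqr]
  calc lorentzGauge p q (fun t => ⨆ k, d k t) ^ q.toReal
      ≤ ∑' k, lorentzGauge p q (d k) ^ q.toReal := lorentzGauge_iSup_rpow_le hq hq' hd
    _ ≤ ∑' k, (θ ^ q.toReal) ^ k * L ^ q.toReal := by
        gcongr with k
        rw [← ENNReal.rpow_natCast, ← ENNReal.rpow_mul, mul_comm q.toReal, ENNReal.rpow_mul,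
          ENNReal.rpow_natCast, ← ENNReal.mul_rpow_of_nonneg _ _ hqr.le]
        gcongr
        exact hdL k
    _ = ((1 - θ ^ q.toReal)⁻¹ ^ q.toReal⁻¹ * L) ^ q.toReal := by
        rw [ENNReal.tsum_mul_right, ENNReal.tsum_geometric, ENNReal.mul_rpow_of_nonneg _ _ hqr.le,
          ENNReal.rpow_inv_rpow hqr.ne']

lemma tsum_pow_mul_le_iSup_pow_mul {v w : ℝ≥0∞} (hw : w ≠ 0) (hw' : w ≠ ∞) (a : ℕ → ℝ≥0∞) :
    ∑' k, v ^ k * a k ≤ (1 - v / w)⁻¹ * ⨆ k, w ^ k * a k := by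
  rw [← ENNReal.tsum_geometric, ← ENNReal.tsum_mul_right]
  refine ENNReal.tsum_le_tsum fun k => ?_
  calc v ^ k * a k = (v / w) ^ k * (w ^ k * a k) := by
        rw [← mul_assoc, ← mul_pow, ENNReal.div_mul_cancel hw hw']
    _ ≤ _ := by gcongr; exact le_iSup (fun k => w ^ k * a k) k

lemma exists_lorentzGauge_le_of_le_tsum (hp : 1 < p) (hp' : p ≠ ∞) (hq : q ≠ 0) :
    ∃ C : ℝ≥0∞, C ≠ ∞ ∧ ∀ d e : ℝ → ℝ≥0∞, Antitone d →
      (∀ t, 0 < t → e t ≤ ∑' k : ℕ, 2 ^ k * d (2 ^ k * t)) →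
      lorentzGauge p q e ≤ C * lorentzGauge p q d := by
  have hpr : 1 < p.toReal := (ENNReal.toReal_lt_toReal ENNReal.one_ne_top hp').2 hp
  obtain ⟨w, hw, hwp⟩ : ∃ w : ℝ≥0∞, 2 < w ∧ w < 2 ^ p.toReal :=
    exists_between <| by
      simpa using ENNReal.rpow_lt_rpow_of_exponent_lt ENNReal.one_lt_two (by simp) hpr
  have hw_top : w ≠ ∞ := hwp.ne_top
  have hw_zero : w ≠ 0 := (zero_le.trans_lt hw).ne'
  have hratio : 2 / w < 1 := ENNReal.div_lt_of_lt_mul (by simpa using hw)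
  have hθ : w ^ (1 / p.toReal) / 2 < 1 := by
    refine ENNReal.div_lt_of_lt_mul ?_
    rw [one_mul, one_div, ENNReal.rpow_inv_lt_iff (by positivity)]
    exact hwp
  obtain ⟨C, hC, hCd⟩ := exists_lorentzGauge_iSup_le hq hθ
  refine ⟨(1 - 2 / w)⁻¹ ^ (1 / p.toReal) * C, ?_, fun d e hd hde => ?_⟩
  · refine ENNReal.mul_ne_top (ENNReal.rpow_ne_top_of_nonneg (by positivity) ?_) hC
    exact ENNReal.inv_ne_top.2 (tsub_pos_of_lt hratio).ne'
  have hsup (t : ℝ) (ht : 0 < t) : e t ≤ (1 - 2 / w)⁻¹ * ⨆ k : ℕ, w ^ k * d (2 ^ k * t) :=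
    (hde t ht).trans (tsum_pow_mul_le_iSup_pow_mul hw_zero hw_top _)
  have hdilate (k : ℕ) : lorentzGauge p q (fun t => w ^ k * d (2 ^ k * t)) =
      (w ^ (1 / p.toReal) / 2) ^ k * lorentzGauge p q d := by
    have h2 : ENNReal.ofReal (2 ^ k) = 2 ^ k := by simp [ENNReal.ofReal_pow]
    rw [lorentzGauge_const_mul hq (ENNReal.pow_ne_top hw_top),
      lorentzGauge_comp_mul_left hq (pow_pos two_pos k) d, h2, ← mul_assoc, ← mul_pow,
      ENNReal.div_mul_cancel two_ne_zero ENNReal.ofNat_ne_top, ← ENNReal.rpow_natCast w,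
      ← ENNReal.rpow_mul, mul_comm (k : ℝ), ENNReal.rpow_mul, ENNReal.rpow_natCast]
  calc lorentzGauge p q e
      ≤ lorentzGauge p q (fun t => (1 - 2 / w)⁻¹ * ⨆ k : ℕ, w ^ k * d (2 ^ k * t)) :=
        lorentzGauge_mono hsup
    _ = (1 - 2 / w)⁻¹ ^ (1 / p.toReal) *
          lorentzGauge p q (fun t => ⨆ k : ℕ, w ^ k * d (2 ^ k * t)) :=
        lorentzGauge_const_mul hq (ENNReal.inv_ne_top.2 (tsub_pos_of_lt hratio).ne') _
    _ ≤ (1 - 2 / w)⁻¹ ^ (1 / p.toReal) * (C * lorentzGauge p q d) := by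
        gcongr
        refine hCd p _ _ (fun k => ?_) fun k => (hdilate k).le
        exact (hd.measurable.comp (measurable_const_mul _)).const_mul _
    _ = _ := (mul_assoc _ _ _).symm

end LorentzGauge

section DistributionFunction

variable {X : Type*} [MeasurableSpace X] {μ : Measure X} {p q : ℝ≥0∞} {h : X → ℝ≥0∞}

lemma distFn_antitone (μ : Measure X) (f : X → ℝ≥0∞) : Antitone (distFn μ f) := fun _ _ htu =>
  measure_mono fun _ hx => (ENNReal.ofReal_le_ofReal htu).trans_lt hx

lemma distFn_rpow (μ : Measure X) (f : X → ℝ≥0∞) {s t : ℝ} (hs : 0 < s) (ht : 0 < t) :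
    distFn μ (fun x => f x ^ s) (t ^ s) = distFn μ f t := by
  simp only [distFn, ← ENNReal.ofReal_rpow_of_pos ht, ENNReal.rpow_lt_rpow_iff hs]

lemma lorentzNorm_rpow (μ : Measure X) (f : X → ℝ≥0∞) (hq : q ≠ 0) {s : ℝ} (hs : 0 < s) :
    lorentzNorm μ (p / ENNReal.ofReal s) (q / ENNReal.ofReal s) (fun x => f x ^ s) =
      lorentzNorm μ p q f ^ s := by
  have hcomp := lorentzGauge_comp_rpow (p := p) hq hs (distFn μ fun x => f x ^ s)
  refine hcomp.trans (congrArg (· ^ s) (le_antisymm ?_ ?_)) <;>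
  exact lorentzGauge_mono fun t ht => (by rw [distFn_rpow μ f hs ht])

lemma le_tsum_dyadic_lt {T x : ℝ≥0∞} (hT : T ≠ 0) (hTx : T < x) :
    x ≤ ∑' k : ℕ, if 2 ^ k * T < x then 2 ^ (k + 1) * T else 0 := by
  by_contra! hlt
  have hterm (k : ℕ) (hk : 2 ^ k * T < x) :
      2 ^ (k + 1) * T ≤ ∑' k : ℕ, if 2 ^ k * T < x then 2 ^ (k + 1) * T else 0 :=
    (if_pos hk).symm.le.trans (ENNReal.le_tsum k)
  have hall (k : ℕ) : 2 ^ k * T < x := by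
    induction k with
    | zero => simpa using hTx
    | succ k ih => exact (hterm k ih).trans_lt hlt
  obtain ⟨n, hn⟩ := ENNReal.exists_nat_mul_gt hT hlt.ne_top
  refine (hn.trans_le ?_).not_ge (hterm n (hall n))
  gcongr
  exact_mod_cast (Nat.lt_two_pow_self.trans_le (Nat.pow_le_pow_right two_pos n.le_succ)).le

lemma setLIntegral_lt_le_tsum_distFn (hh : Measurable h) {τ : ℝ} (hτ : 0 < τ) :
    ∫⁻ x in {x | ENNReal.ofReal τ < h x}, h x ∂μ ≤
      2 * ENNReal.ofReal τ * ∑' k : ℕ, 2 ^ k * distFn μ h (2 ^ k * τ) := by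
  set T : ℝ≥0∞ := ENNReal.ofReal τ
  have hlevel (k : ℕ) : ENNReal.ofReal (2 ^ k * τ) = 2 ^ k * T := by
    rw [ENNReal.ofReal_mul (by positivity), ENNReal.ofReal_pow zero_le_two, ENNReal.ofReal_ofNat]
  have hmeas (k : ℕ) : MeasurableSet {x | 2 ^ k * T < h x} := measurableSet_lt measurable_const hh
  let layer (k : ℕ) : X → ℝ≥0∞ := {x | 2 ^ k * T < h x}.indicator fun _ => 2 ^ (k + 1) * T
  have hlayers (x : X) (hx : T < h x) : h x ≤ ∑' k, layer k x := by
    simpa only [layer, Set.indicator_apply, Set.mem_ofPred_eq] using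
      le_tsum_dyadic_lt (ENNReal.ofReal_pos.2 hτ).ne' hx
  calc ∫⁻ x in {x | T < h x}, h x ∂μ
      ≤ ∫⁻ x in {x | T < h x}, ∑' k, layer k x ∂μ :=
        setLIntegral_mono' (measurableSet_lt measurable_const hh) hlayers
    _ ≤ ∫⁻ x, ∑' k, layer k x ∂μ := setLIntegral_le_lintegral _ _
    _ = ∑' k : ℕ, 2 ^ (k + 1) * T * distFn μ h (2 ^ k * τ) := by
        rw [lintegral_tsum fun k => (measurable_const.indicator (hmeas k)).aemeasurable]
        simp only [lintegral_indicator_const (hmeas _), distFn, hlevel]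
    _ = 2 * T * ∑' k : ℕ, 2 ^ k * distFn μ h (2 ^ k * τ) := by
        rw [← ENNReal.tsum_mul_left]
        congr with k
        ring

lemma setLIntegral_one_lt_ne_top (hp : 1 < p) (hp' : p ≠ ∞) (hq : q ≠ 0) (hh : Measurable h)
    (hnorm : lorentzNorm μ p q h ≠ ∞) : ∫⁻ x in {x | 1 < h x}, h x ∂μ ≠ ∞ := by
  have hpr : 1 < p.toReal := (ENNReal.toReal_lt_toReal ENNReal.one_ne_top hp').2 hp
  set L := lorentzNorm μ p q h
  have hweak (k : ℕ) : 2 ^ k * distFn μ h (2 ^ k * 1) ≤ (2 / 2 ^ p.toReal) ^ k * L ^ p.toReal := by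
    have hlevel : ENNReal.ofReal (2 ^ k * 1) = 2 ^ k := by simp [ENNReal.ofReal_pow]
    have hk : 2 ^ k * distFn μ h (2 ^ k * 1) ^ (1 / p.toReal) ≤ L := by
      rw [← hlevel]
      exact ofReal_mul_rpow_le_lorentzGauge hq (distFn_antitone μ h) (by positivity)
    rw [one_div, ← ENNReal.rpow_le_rpow_iff (by positivity : 0 < p.toReal),
      ENNReal.mul_rpow_of_nonneg _ _ (by positivity), ENNReal.rpow_inv_rpow (by positivity),
      ← ENNReal.rpow_natCast, ← ENNReal.rpow_mul, mul_comm (k : ℝ), ENNReal.rpow_mul,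
      ENNReal.rpow_natCast, mul_comm, ← ENNReal.le_div_iff_mul_le (by simp) (by simp)] at hk
    rw [div_eq_mul_inv, mul_pow, mul_assoc, ENNReal.inv_pow.symm, ← ENNReal.div_eq_inv_mul]
    gcongr
  have hratio : (2 / 2 ^ p.toReal : ℝ≥0∞) < 1 := by
    refine ENNReal.div_lt_of_lt_mul ?_
    simpa using ENNReal.rpow_lt_rpow_of_exponent_lt ENNReal.one_lt_two (by simp) hpr
  have hlayers := setLIntegral_lt_le_tsum_distFn (μ := μ) hh one_pos
  rw [ENNReal.ofReal_one, mul_one] at hlayers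
  refine ne_top_of_le_ne_top ?_ (hlayers.trans (mul_le_mul_right (ENNReal.tsum_le_tsum hweak) 2))
  rw [ENNReal.tsum_mul_right, ENNReal.tsum_geometric]
  refine ENNReal.mul_ne_top ENNReal.ofNat_ne_top (ENNReal.mul_ne_top ?_ ?_)
  · exact ENNReal.inv_ne_top.2 (tsub_pos_of_lt hratio).ne'
  · exact ENNReal.rpow_ne_top_of_nonneg (by positivity) hnorm

lemma lintegral_mul_le_add_setLIntegral_lt (hh : Measurable h) {τ : ℝ≥0∞} (hτ : τ ≠ ∞)
    (w : X → ℝ≥0∞) :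
    ∫⁻ x, h x * w x ∂μ ≤ τ * ∫⁻ x, w x ∂μ + ∫⁻ x in {x | τ < h x}, h x * w x ∂μ := by
  have hS : MeasurableSet {x | τ < h x} := measurableSet_lt measurable_const hh
  rw [← lintegral_add_compl _ hS, add_comm, ← lintegral_const_mul' _ _ hτ]
  gcongr ?_ + _
  refine (setLIntegral_mono' hS.compl fun x hx => ?_).trans (setLIntegral_le_lintegral _ _)
  gcongr
  exact not_lt.1 hx

lemma iSup_ne_top_of_le_lintegral_kernel (hp : 1 < p) (hp' : p ≠ ∞) (hq : q ≠ 0)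
    (hh : Measurable h) (hnorm : lorentzNorm μ p q h ≠ ∞) {k : X → X → ℝ≥0∞} {B A : ℝ≥0∞}
    (hB : B ≠ ∞) (hA : A ≠ ∞) (hk : ∀ x z, k x z ≤ 1) (hkA : ∀ x, ∫⁻ z, k x z ∂μ ≤ A)
    (hle : ∀ x, h x ≤ B * ∫⁻ z, h z * k x z ∂μ) : ⨆ x, h x ≠ ∞ := by
  have hlarge := setLIntegral_one_lt_ne_top hp hp' hq hh hnorm
  refine ne_top_of_le_ne_top (b := B * (1 * A + ∫⁻ z in {z | 1 < h z}, h z ∂μ)) (by finiteness)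
    (iSup_le fun x => (hle x).trans ?_)
  gcongr
  refine (lintegral_mul_le_add_setLIntegral_lt hh ENNReal.one_ne_top (k x)).trans ?_
  gcongr with z
  · exact hkA x
  · exact mul_le_of_le_one_right' (hk x z)

end DistributionFunction

section PositiveKernel

variable {X Y : Type*} [MeasurableSpace X] [MeasurableSpace Y] {μ : Measure X} {ν : Measure Y}
  [SFinite μ] [SFinite ν] {k : Y → X → ℝ≥0∞} {h : X → ℝ≥0∞} {a : Y → ℝ≥0∞} {A : ℝ≥0∞} {M : ℝ}

lemma distFn_mul_le_setLIntegral (hk : Measurable (Function.uncurry k)) (hh : Measurable h)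
    (hM : 0 < M) (hkM : ∀ y, ∫⁻ x, k y x ∂μ ≤ ENNReal.ofReal M)
    (hkA : ∀ x, ∫⁻ y, k y x ∂ν ≤ A) (ha : ∀ y, a y ≤ ∫⁻ x, h x * k y x ∂μ) {τ : ℝ} (hτ : 0 < τ) :
    ENNReal.ofReal (M * τ) * distFn ν a (2 * (M * τ)) ≤
      A * ∫⁻ x in {x | ENNReal.ofReal τ < h x}, h x ∂μ := by
  set S : Set X := {x | ENNReal.ofReal τ < h x}
  have hhk : Measurable (Function.uncurry fun y x => h x * k y x) := by fun_prop
  have hsplit (y : Y) : a y ≤ ENNReal.ofReal (M * τ) + ∫⁻ x in S, h x * k y x ∂μ := by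
    refine (ha y).trans ((lintegral_mul_le_add_setLIntegral_lt hh
      (ENNReal.ofReal_ne_top (r := τ)) _).trans ?_)
    rw [ENNReal.ofReal_mul hM.le, mul_comm]
    gcongr
    exact hkM y
  have hlarge (y : Y) (hy : ENNReal.ofReal (2 * (M * τ)) < a y) :
      ENNReal.ofReal (M * τ) ≤ ∫⁻ x in S, h x * k y x ∂μ := by
    rw [two_mul, ENNReal.ofReal_add (by positivity) (by positivity)] at hy
    exact ((ENNReal.add_lt_add_iff_left ENNReal.ofReal_ne_top).1 (hy.trans_le (hsplit y))).le
  calc ENNReal.ofReal (M * τ) * distFn ν a (2 * (M * τ))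
      ≤ ENNReal.ofReal (M * τ) * ν {y | ENNReal.ofReal (M * τ) ≤ ∫⁻ x in S, h x * k y x ∂μ} := by
        gcongr
        exact measure_mono hlarge
    _ ≤ ∫⁻ y, ∫⁻ x in S, h x * k y x ∂μ ∂ν :=
        mul_meas_ge_le_lintegral hhk.lintegral_prod_right' _
    _ = ∫⁻ x in S, h x * ∫⁻ y, k y x ∂ν ∂μ := by
        rw [lintegral_lintegral_swap hhk.aemeasurable]
        refine lintegral_congr fun x => lintegral_const_mul _ ?_
        exact hk.comp measurable_prodMk_right
    _ ≤ ∫⁻ x in S, h x * A ∂μ := by gcongr with x; exact hkA x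
    _ = A * ∫⁻ x in S, h x ∂μ := by rw [lintegral_mul_const _ hh, mul_comm]

lemma distFn_le_tsum_distFn_of_kernel (hk : Measurable (Function.uncurry k)) (hh : Measurable h)
    (hM : 0 < M) (hkM : ∀ y, ∫⁻ x, k y x ∂μ ≤ ENNReal.ofReal M)
    (hkA : ∀ x, ∫⁻ y, k y x ∂ν ≤ A) (ha : ∀ y, a y ≤ ∫⁻ x, h x * k y x ∂μ) {τ : ℝ} (hτ : 0 < τ) :
    distFn ν a (2 * (M * τ)) ≤
      2 * A / ENNReal.ofReal M * ∑' k : ℕ, 2 ^ k * distFn μ h (2 ^ k * τ) := by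
  set S : ℝ≥0∞ := ∑' k : ℕ, 2 ^ k * distFn μ h (2 ^ k * τ)
  have hscaled : ENNReal.ofReal τ * (ENNReal.ofReal M * distFn ν a (2 * (M * τ))) ≤
      ENNReal.ofReal τ * (2 * A * S) := by
    calc _ = ENNReal.ofReal (M * τ) * distFn ν a (2 * (M * τ)) := by
          rw [ENNReal.ofReal_mul hM.le]
          ring
      _ ≤ A * (2 * ENNReal.ofReal τ * S) :=
          (distFn_mul_le_setLIntegral hk hh hM hkM hkA ha hτ).trans
            (mul_le_mul_right (setLIntegral_lt_le_tsum_distFn hh hτ) A)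
      _ = _ := by ring
  have hbound := (ENNReal.mul_le_mul_iff_right (ENNReal.ofReal_pos.2 hτ).ne'
    ENNReal.ofReal_ne_top).1 hscaled
  rw [mul_comm, ← ENNReal.le_div_iff_mul_le (Or.inl (ENNReal.ofReal_pos.2 hM).ne')
    (Or.inl ENNReal.ofReal_ne_top)] at hbound
  exact hbound.trans_eq ENNReal.mul_div_right_comm

lemma exists_lorentzNorm_le_of_le_lintegral_kernel {p q : ℝ≥0∞} (hp : 1 < p) (hp' : p ≠ ∞)
    (hq : q ≠ 0) : ∃ C : ℝ≥0∞, C ≠ ∞ ∧ ∀ (k : Y → X → ℝ≥0∞) (h : X → ℝ≥0∞) (a : Y → ℝ≥0∞)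
      (A : ℝ≥0∞) (M : ℝ), Measurable (Function.uncurry k) → Measurable h → 0 < M → A ≠ ∞ →
      (∀ y, ∫⁻ x, k y x ∂μ ≤ ENNReal.ofReal M) → (∀ x, ∫⁻ y, k y x ∂ν ≤ A) →
      (∀ y, a y ≤ ∫⁻ x, h x * k y x ∂μ) →
      lorentzNorm ν p q a ≤
        C * (2 * A / ENNReal.ofReal M) ^ (1 / p.toReal) * ENNReal.ofReal (2 * M) *
          lorentzNorm μ p q h := by
  obtain ⟨C, hC, hCd⟩ := exists_lorentzGauge_le_of_le_tsum hp hp' hq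
  refine ⟨C, hC, fun k h a A M hk hh hM hA hkM hkA ha => ?_⟩
  have hM_ne : ENNReal.ofReal M ≠ 0 := (ENNReal.ofReal_pos.2 hM).ne'
  have h2M : 0 < (2 * M)⁻¹ := by positivity
  set D : ℝ≥0∞ := 2 * A / ENNReal.ofReal M
  have hD : D ≠ ∞ := ENNReal.div_ne_top (ENNReal.mul_ne_top ENNReal.ofNat_ne_top hA) hM_ne
  have hdist (t : ℝ) (ht : 0 < t) :
      distFn ν a t ≤ ∑' k : ℕ, 2 ^ k * (D * distFn μ h ((2 * M)⁻¹ * (2 ^ k * t))) := by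
    obtain ⟨τ, hτ, rfl⟩ : ∃ τ, 0 < τ ∧ 2 * (M * τ) = t :=
      ⟨(2 * M)⁻¹ * t, mul_pos h2M ht, by field_simp⟩
    have hlevel (k : ℕ) : (2 * M)⁻¹ * (2 ^ k * (2 * (M * τ))) = 2 ^ k * τ := by field_simp
    simp only [hlevel, mul_left_comm _ D, ENNReal.tsum_mul_left]
    exact distFn_le_tsum_distFn_of_kernel hk hh hM hkM hkA ha hτ
  calc lorentzNorm ν p q a
      ≤ C * lorentzGauge p q (fun t => D * distFn μ h ((2 * M)⁻¹ * t)) :=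
        hCd _ _ (fun t u htu => by gcongr; exact distFn_antitone μ h (by gcongr)) hdist
    _ = C * (D ^ (1 / p.toReal) * (ENNReal.ofReal (2 * M) * lorentzNorm μ p q h)) := by
        rw [lorentzGauge_const_mul hq hD (fun t => distFn μ h ((2 * M)⁻¹ * t))]
        congr 2
        change _ = _ * lorentzGauge p q (distFn μ h)
        rw [lorentzGauge_comp_mul_left hq h2M (distFn μ h), ← mul_assoc,
          ← ENNReal.ofReal_mul (by positivity), mul_inv_cancel₀ (by positivity), ENNReal.ofReal_one,
          one_mul]
    _ = _ := by simp only [mul_assoc]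

end PositiveKernel

section Peetre

variable {X : Type*} [MeasurableSpace X] {μ : Measure X} {w : X → X → ℝ≥0∞} {G : X → ℝ≥0∞}
  {B : ℝ≥0∞} {s : ℝ} {x : X}

lemma iSup_mul_weight_le_lintegral (hw : ∀ x y z, w z y * w y x ≤ w z x)
    (hG : ∀ y, G y ≤ B * ∫⁻ z, G z * w z y ∂μ) (x : X) :
    ⨆ y, G y * w y x ≤ B * ∫⁻ z, G z * w z x ∂μ := by
  refine iSup_le fun y => ?_
  calc G y * w y x ≤ (B * ∫⁻ z, G z * w z y ∂μ) * w y x := by gcongr; exact hG y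
    _ ≤ B * ∫⁻ z, G z * w z y * w y x ∂μ := by
        rw [mul_assoc]
        gcongr
        exact lintegral_mul_const_le _ _
    _ ≤ B * ∫⁻ z, G z * w z x ∂μ := by
        refine mul_le_mul_right (lintegral_mono fun z => ?_) _
        rw [mul_assoc]
        exact mul_le_mul_right (hw x y z) _

-- With `m = ⨆ y, G y * w y x`, the previous lemma gives `m ≤ B ∫ (G w)^s m^(1-s)`;
-- finiteness of `m` allows dividing by `m^(1-s)`.
lemma rpow_le_lintegral_rpow_of_le_lintegral (hs : 0 < s) (hs1 : s ≤ 1)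
    (hw : ∀ x y z, w z y * w y x ≤ w z x) (hwx : 1 ≤ w x x)
    (hG : ∀ y, G y ≤ B * ∫⁻ z, G z * w z y ∂μ) (hfin : ⨆ y, G y * w y x ≠ ∞) :
    G x ^ s ≤ B * ∫⁻ z, (G z * w z x) ^ s ∂μ := by
  set m := ⨆ y, G y * w y x
  have hs1' : 0 ≤ 1 - s := sub_nonneg.2 hs1
  have hle (y : X) : G y * w y x ≤ m := le_iSup (fun y => G y * w y x) y
  have hGx : G x ≤ m := (le_mul_of_one_le_right' hwx).trans (hle x)
  rcases eq_or_ne m 0 with hm | hm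
  · rw [le_zero_iff.1 (hGx.trans_eq hm), ENNReal.zero_rpow_of_pos hs]
    exact zero_le
  have hm_pow : m ^ (1 - s) ≠ ∞ := ENNReal.rpow_ne_top_of_nonneg hs1' hfin
  refine (ENNReal.rpow_le_rpow hGx hs.le).trans ?_
  rw [← ENNReal.mul_le_mul_iff_left (ENNReal.rpow_pos (pos_iff_ne_zero.2 hm) hfin).ne' hm_pow,
    ← ENNReal.rpow_add_of_nonneg _ _ hs.le hs1', add_sub_cancel, ENNReal.rpow_one]
  calc m ≤ B * ∫⁻ z, G z * w z x ∂μ := iSup_mul_weight_le_lintegral hw hG x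
    _ ≤ B * ∫⁻ z, (G z * w z x) ^ s * m ^ (1 - s) ∂μ := by
        refine mul_le_mul_right (lintegral_mono fun z => ?_) _
        calc G z * w z x = (G z * w z x) ^ s * (G z * w z x) ^ (1 - s) := by
              rw [← ENNReal.rpow_add_of_nonneg _ _ hs.le hs1', add_sub_cancel, ENNReal.rpow_one]
          _ ≤ _ := by gcongr; exact hle z
    _ = B * (∫⁻ z, (G z * w z x) ^ s ∂μ) * m ^ (1 - s) := by
        rw [lintegral_mul_const' _ _ hm_pow, mul_assoc]

end Peetre

section Decay

/-- The weight `(1 + ‖u‖)⁻¹`, extended-real valued; its powers dominate Schwartz functions. -/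
noncomputable def decayWeight {E : Type*} [NormedAddCommGroup E] (u : E) : ℝ≥0∞ := (1 + ‖u‖ₑ)⁻¹

variable {E : Type*} [NormedAddCommGroup E] {r : ℝ}

lemma decayWeight_zero : decayWeight (0 : E) = 1 := by simp [decayWeight]

lemma decayWeight_le_one (u : E) : decayWeight u ≤ 1 := ENNReal.inv_le_one.2 le_self_add

lemma decayWeight_mul_decayWeight_le (u v : E) :
    decayWeight u * decayWeight v ≤ decayWeight (u + v) := by
  rw [decayWeight, decayWeight, ← ENNReal.mul_inv (by simp) (by simp), decayWeight,
    ENNReal.inv_le_inv]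
  calc 1 + ‖u + v‖ₑ ≤ 1 + (‖u‖ₑ + ‖v‖ₑ) := by gcongr; exact enorm_add_le u v
    _ ≤ 1 + (‖u‖ₑ + ‖v‖ₑ) + ‖u‖ₑ * ‖v‖ₑ := le_self_add
    _ = (1 + ‖u‖ₑ) * (1 + ‖v‖ₑ) := by ring

lemma decayWeight_le_decayWeight_add_mul (u v : E) :
    decayWeight v ≤ decayWeight (u + v) * (1 + ‖u‖ₑ) := by
  calc decayWeight v = decayWeight u * decayWeight v * (1 + ‖u‖ₑ) := by
        rw [decayWeight, decayWeight, mul_right_comm,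
          ENNReal.inv_mul_cancel (by simp) (by simp), one_mul]
    _ ≤ _ := by gcongr; exact decayWeight_mul_decayWeight_le u v

lemma decayWeight_eq_ofReal (u : E) : decayWeight u = ENNReal.ofReal (1 + ‖u‖)⁻¹ := by
  rw [decayWeight, ENNReal.ofReal_inv_of_pos (by positivity),
    ENNReal.ofReal_add zero_le_one (by simp), ENNReal.ofReal_one, ofReal_norm]

lemma measurable_decayWeight [MeasurableSpace E] [OpensMeasurableSpace E] :
    Measurable (decayWeight : E → ℝ≥0∞) := by
  unfold decayWeight
  fun_prop

lemma decayWeight_mul_le (hr : 1 ≤ r) (u : ℝ) : decayWeight (r * u) ≤ decayWeight u := by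
  rw [decayWeight, decayWeight, ENNReal.inv_le_inv, enorm_mul]
  gcongr
  refine le_mul_of_one_le_left' ?_
  rwa [Real.enorm_eq_ofReal (by linarith), ENNReal.one_le_ofReal]

lemma lintegral_decayWeight_sq_ne_top : ∫⁻ u : ℝ, decayWeight u ^ 2 ≠ ∞ := by
  have hfin := finite_integral_one_add_norm (E := ℝ) (μ := volume) (r := 2) (by simp)
  convert hfin.ne using 3 with u
  rw [decayWeight_eq_ofReal, ← ENNReal.ofReal_pow (by positivity), Real.rpow_neg (by positivity),
    inv_pow, Real.rpow_two]

lemma ofReal_mul_lintegral_decayWeight_sq (hr : 0 < r) (x : ℝ) :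
    ENNReal.ofReal r * ∫⁻ z, decayWeight (r * (z - x)) ^ 2 = ∫⁻ u : ℝ, decayWeight u ^ 2 := by
  rw [lintegral_sub_right_eq_self (fun z => decayWeight (r * z) ^ 2) x]
  exact (lintegral_comp_mul_left hr fun u => decayWeight u ^ 2).symm

lemma tsum_int_decayWeight_sq_ne_top : ∑' n : ℤ, decayWeight (n : ℝ) ^ 2 ≠ ∞ := by
  have hnat : Summable fun n : ℕ => ((1 + (n : ℝ))⁻¹) ^ 2 := by
    refine ((summable_nat_add_iff 1).2 (Real.summable_nat_pow_inv.2 one_lt_two)).congr fun n => ?_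
    rw [inv_pow, add_comm 1 (n : ℝ), Nat.cast_add_one]
  have hint : Summable fun n : ℤ => ((1 + |(n : ℝ)|)⁻¹) ^ 2 :=
    .of_nat_of_neg (by simpa using hnat) (by simpa using hnat)
  convert hint.tsum_ofReal_ne_top using 3 with n
  rw [decayWeight_eq_ofReal, ENNReal.ofReal_pow (by positivity), Real.norm_eq_abs]

lemma tsum_decayWeight_sub_int_sq_le (hr : 1 ≤ r) (z : ℝ) :
    ∑' n : ℤ, decayWeight (r * (z - n)) ^ 2 ≤ 4 * ∑' n : ℤ, decayWeight (n : ℝ) ^ 2 := by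
  have hhalf : 2⁻¹ ≤ decayWeight (z - round z) := by
    rw [decayWeight, ENNReal.inv_le_inv, ← one_add_one_eq_two]
    gcongr
    rw [← ofReal_norm, ENNReal.ofReal_le_one]
    exact (abs_sub_round z).trans (by norm_num)
  have hnear (n : ℤ) : decayWeight (r * (z - n)) ≤ 2 * decayWeight ((n - round z : ℤ) : ℝ) := by
    rw [← ENNReal.inv_mul_le_iff two_ne_zero ENNReal.ofNat_ne_top]
    calc 2⁻¹ * decayWeight (r * (z - n)) ≤ decayWeight (z - round z) * decayWeight (n - z) := by
          gcongr
          refine (decayWeight_mul_le hr _).trans_eq ?_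
          rw [decayWeight, decayWeight, ← enorm_neg, neg_sub]
      _ ≤ _ := (decayWeight_mul_decayWeight_le _ _).trans_eq (by push_cast; congr 1; ring)
  calc ∑' n : ℤ, decayWeight (r * (z - n)) ^ 2
      ≤ ∑' n : ℤ, 4 * decayWeight ((n - round z : ℤ) : ℝ) ^ 2 := by
        gcongr with n
        refine (pow_le_pow_left₀ zero_le (hnear n) 2).trans_eq ?_
        rw [mul_pow]
        norm_num
    _ = 4 * ∑' n : ℤ, decayWeight (n : ℝ) ^ 2 := by
        rw [ENNReal.tsum_mul_left]
        congr 1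
        exact (Equiv.subRight (round z)).tsum_eq fun n : ℤ => decayWeight (n : ℝ) ^ 2

lemma exists_enorm_schwartz_le_decayWeight_pow {F G : Type*} [NormedAddCommGroup F]
    [NormedSpace ℝ F] [NormedAddCommGroup G] [NormedSpace ℝ G] (K : 𝓢(F, G)) (N : ℕ) :
    ∃ B : ℝ≥0∞, B ≠ ∞ ∧ ∀ u, ‖K u‖ₑ ≤ B * decayWeight u ^ N := by
  refine ⟨ENNReal.ofReal (2 ^ N * (Finset.Iic (N, 0)).sup
    (fun m => SchwartzMap.seminorm ℝ m.1 m.2) K), ENNReal.ofReal_ne_top, fun u => ?_⟩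
  have hpos : 0 < (1 + ‖u‖) ^ N := by positivity
  rw [decayWeight_eq_ofReal, ← ENNReal.ofReal_pow (by positivity),
    ← ENNReal.ofReal_mul (by positivity), ← ofReal_norm, inv_pow, ← div_eq_mul_inv]
  refine ENNReal.ofReal_le_ofReal ((le_div_iff₀' hpos).2 ?_)
  simpa using K.one_add_le_sup_seminorm_apply (𝕜 := ℝ) (m := (N, 0)) le_rfl le_rfl u

end Decay

section ReproducingFormula

variable {f : ℝ → ℂ} {D : ℝ≥0∞} {k : ℕ} {R r : ℝ}

lemma enorm_comp_add_div_mul_decayWeight_pow_le (hf : ∀ x, ‖f x‖ₑ * decayWeight x ^ k ≤ D)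
    (hr : 1 ≤ r) (x u : ℝ) : ‖f (x + u / r)‖ₑ * decayWeight u ^ k ≤ D * (1 + ‖x‖ₑ) ^ k := by
  have hweight : decayWeight u ≤ decayWeight (x + u / r) * (1 + ‖x‖ₑ) := by
    calc decayWeight u ≤ decayWeight (u / r) := by
          simpa only [mul_div_cancel₀ u (by positivity : r ≠ 0)] using decayWeight_mul_le hr (u / r)
      _ ≤ _ := decayWeight_le_decayWeight_add_mul x (u / r)
  calc ‖f (x + u / r)‖ₑ * decayWeight u ^ k
      ≤ ‖f (x + u / r)‖ₑ * (decayWeight (x + u / r) * (1 + ‖x‖ₑ)) ^ k := by gcongr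
    _ = ‖f (x + u / r)‖ₑ * decayWeight (x + u / r) ^ k * (1 + ‖x‖ₑ) ^ k := by
        rw [mul_pow, mul_assoc]
    _ ≤ D * (1 + ‖x‖ₑ) ^ k := by gcongr; exact hf _

lemma exists_enorm_comp_add_div_mul_schwartz_le (hf : ∀ x, ‖f x‖ₑ * decayWeight x ^ k ≤ D)
    (hD : D ≠ ∞) (K : 𝓢(ℝ, ℂ)) (x : ℝ) :
    ∃ A : ℝ≥0∞, A ≠ ∞ ∧ ∀ r, 1 ≤ r → ∀ u, ‖f (x + u / r) * K u‖ₑ ≤ A * decayWeight u ^ 2 := by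
  obtain ⟨B, hB, hK⟩ := exists_enorm_schwartz_le_decayWeight_pow K (k + 2)
  refine ⟨D * (1 + ‖x‖ₑ) ^ k * B, by finiteness, fun r hr u => ?_⟩
  calc ‖f (x + u / r) * K u‖ₑ ≤ ‖f (x + u / r)‖ₑ * (B * decayWeight u ^ (k + 2)) := by
        rw [enorm_mul]
        gcongr
        exact hK u
    _ = ‖f (x + u / r)‖ₑ * decayWeight u ^ k * B * decayWeight u ^ 2 := by ring
    _ ≤ D * (1 + ‖x‖ₑ) ^ k * B * decayWeight u ^ 2 := by
        gcongr ?_ * _ * _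
        exact enorm_comp_add_div_mul_decayWeight_pow_le hf hr x u

lemma integrable_comp_add_div_mul_schwartz (hfc : Continuous f)
    (hf : ∀ x, ‖f x‖ₑ * decayWeight x ^ k ≤ D) (hD : D ≠ ∞) (hr : 1 ≤ r) (K : 𝓢(ℝ, ℂ)) (x : ℝ) :
    Integrable fun u => f (x + u / r) * K u := by
  obtain ⟨A, hA, hle⟩ := exists_enorm_comp_add_div_mul_schwartz_le hf hD K x
  refine ⟨((hfc.comp (by fun_prop)).mul K.continuous).aestronglyMeasurable, ?_⟩
  refine (lintegral_mono (hle r hr)).trans_lt ?_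
  rw [lintegral_const_mul' _ _ hA]
  exact (ENNReal.mul_ne_top hA lintegral_decayWeight_sq_ne_top).lt_top

lemma tendsto_integral_comp_add_div_mul_schwartz (hfc : Continuous f)
    (hf : ∀ x, ‖f x‖ₑ * decayWeight x ^ k ≤ D) (hD : D ≠ ∞) (K : 𝓢(ℝ, ℂ)) (x : ℝ) :
    Tendsto (fun r => ∫ u, f (x + u / r) * K u) atTop (nhds (f x * ∫ u, K u)) := by
  obtain ⟨A, hA, hle⟩ := exists_enorm_comp_add_div_mul_schwartz_le hf hD K x
  have hbound_ne_top (u : ℝ) : A * decayWeight u ^ 2 ≠ ∞ :=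
    ENNReal.mul_ne_top hA (by finiteness [(decayWeight_le_one u).trans_lt ENNReal.one_lt_top])
  rw [← integral_const_mul]
  refine tendsto_integral_filter_of_dominated_convergence
    (fun u => (A * decayWeight u ^ 2).toReal) ?_ ?_ ?_ ?_
  · exact .of_forall fun r => ((hfc.comp (by fun_prop)).mul K.continuous).aestronglyMeasurable
  · filter_upwards [eventually_ge_atTop 1] with r hr
    refine ae_of_all _ fun u => ?_
    rw [← toReal_enorm]
    exact ENNReal.toReal_mono (hbound_ne_top u) (hle r hr u)
  · refine integrable_toReal_of_lintegral_ne_top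
      ((measurable_decayWeight.pow_const 2).const_mul A).aemeasurable ?_
    rw [lintegral_const_mul' _ _ hA]
    exact ENNReal.mul_ne_top hA lintegral_decayWeight_sq_ne_top
  · refine ae_of_all _ fun u => ((hfc.tendsto x).comp ?_).mul_const _
    simpa using (tendsto_const_nhds (x := x)).add
      ((tendsto_const_nhds (x := u)).div_atTop tendsto_id)

lemma integral_mul_comp_mul_sub (hr : 0 < r) (g : ℝ → ℂ) (x : ℝ) :
    ∫ y, f y * (r * g (r * (y - x))) = ∫ u, f (x + u / r) * g u := by
  have hr' : (r : ℂ) ≠ 0 := Complex.ofReal_ne_zero.2 hr.ne'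
  calc ∫ y, f y * (r * g (r * (y - x))) = ∫ y, r * (f (x + r * y / r) * g (r * y)) := by
        rw [← integral_sub_right_eq_self (fun y => r * (f (x + r * y / r) * g (r * y))) x]
        congr with y
        rw [mul_div_cancel_left₀ _ hr.ne', add_sub_cancel]
        ring
    _ = ∫ u, f (x + u / r) * g u := by
        rw [integral_const_mul, Measure.integral_comp_mul_left (fun u => f (x + u / r) * g u) r,
          abs_of_pos (inv_pos.2 hr), Complex.real_smul, ofReal_inv, mul_inv_cancel_left₀ hr']

lemma integrable_mul_comp_mul_sub (hr : 0 < r) {g : ℝ → ℂ} {x : ℝ}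
    (hint : Integrable fun u => f (x + u / r) * g u) :
    Integrable fun y => f y * (r * g (r * (y - x))) := by
  refine (((hint.comp_mul_left' hr.ne').const_mul (r : ℂ)).comp_sub_right x).congr ?_
  refine ae_of_all _ fun y => ?_
  simp only [mul_div_cancel_left₀ _ hr.ne', add_sub_cancel]
  ring

lemma fourierInv_mul_comp_mul_sub (hr : 0 < r) (g : ℝ → ℂ) (x v : ℝ) :
    𝓕⁻ (fun y => r * g (r * (y - x))) v = Complex.exp (2 * π * v * x * I) * 𝓕⁻ g (v / r) := by
  simp only [Real.fourierInv_eq', smul_eq_mul]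
  rw [integral_mul_comp_mul_sub hr, ← integral_const_mul]
  congr with u
  rw [← mul_assoc, ← Complex.exp_add]
  congr 2
  simp only [RCLike.inner_apply, conj_trivial]
  push_cast
  ring

lemma exists_schwartz_eq_mul_comp_mul_sub (hr : r ≠ 0) (K : 𝓢(ℝ, ℂ)) (x : ℝ) :
    ∃ L : 𝓢(ℝ, ℂ), ∀ y, L y = r * K (r * (y - x)) := by
  let dilation := ContinuousLinearEquiv.unitsEquivAut ℝ (Units.mk0 r hr)
  refine ⟨(r : ℂ) • compSubConstCLM ℂ x (compCLMOfContinuousLinearEquiv ℂ dilation K), fun y => ?_⟩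
  simp [dilation, mul_comm r]

lemma exists_schwartz_fourierInv_eq_one (ρ : ℝ) :
    ∃ K : 𝓢(ℝ, ℂ), ∀ v, |v| ≤ ρ → 𝓕⁻ (K : ℝ → ℂ) v = 1 := by
  let bump : ContDiffBump (0 : ℝ) :=
    ⟨max ρ 1, max ρ 1 + 1, by positivity, lt_add_one _⟩
  have hsmooth : ContDiff ℝ (↑(⊤ : ℕ∞)) fun v => (bump v : ℂ) :=
    Complex.ofRealCLM.contDiff.comp bump.contDiff
  have hsupp : HasCompactSupport fun v => (bump v : ℂ) :=
    bump.hasCompactSupport.comp_left Complex.ofReal_zero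
  refine ⟨𝓕 (hsupp.toSchwartzMap hsmooth), fun v hv => ?_⟩
  rw [← fourierInv_coe, FourierTransform.fourierInv_fourier_eq]
  have hv : v ∈ Metric.closedBall 0 bump.rIn := by
    simpa [bump] using Or.inl hv
  exact congrArg Complex.ofReal (bump.one_of_mem_closedBall hv)

-- `𝓕⁻ (L' - L)` is a modulation of `(𝓕⁻ K)(· / r') - (𝓕⁻ K)(· / r)`, which vanishes on `|v| < 2r`.
lemma disjoint_tsupport_fourierInv_sub_Icc {K L L' : 𝓢(ℝ, ℂ)} {r' x : ℝ}
    (hK : ∀ v, |v| ≤ 2 → 𝓕⁻ (K : ℝ → ℂ) v = 1) (hr : 0 < r) (hrr' : r ≤ r') (hR : R < 2 * r)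
    (hL : ∀ y, L y = r * K (r * (y - x))) (hL' : ∀ y, L' y = r' * K (r' * (y - x))) :
    Disjoint (tsupport (𝓕⁻ (L' - L) : 𝓢(ℝ, ℂ))) (Set.Icc (-R) R) := by
  have hdilate {ρ v : ℝ} (hρ : r ≤ ρ) (hv : |v| < 2 * r) : 𝓕⁻ (K : ℝ → ℂ) (v / ρ) = 1 := by
    have hρ₀ : 0 < ρ := hr.trans_le hρ
    refine hK _ ?_
    rw [abs_div, abs_of_pos hρ₀, div_le_iff₀ hρ₀]
    linarith
  have hsub : 𝓕⁻ (L' - L) = 𝓕⁻ L' - 𝓕⁻ L :=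
    map_sub (FourierTransform.fourierInvCLM ℂ 𝓢(ℝ, ℂ)) L' L
  have hzero (v : ℝ) (hv : |v| < 2 * r) : 𝓕⁻ (L' - L) v = 0 := by
    rw [hsub, sub_apply, fourierInv_coe, fourierInv_coe, funext hL, funext hL',
      fourierInv_mul_comp_mul_sub hr, fourierInv_mul_comp_mul_sub (hr.trans_le hrr'),
      hdilate le_rfl hv, hdilate hrr' hv, sub_self]
  refine Set.disjoint_left.2 fun v hv hvR => notMem_tsupport_iff_eventuallyEq.2 ?_ hv
  have hv2 : |v| < 2 * r := (abs_le.2 hvR).trans_lt hR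
  filter_upwards [(isOpen_lt continuous_abs continuous_const).mem_nhds hv2] with w hw
  exact hzero w hw

end ReproducingFormula

namespace InER

variable {f : ℝ → ℂ} {R r : ℝ} {K : 𝓢(ℝ, ℂ)}

lemma exists_enorm_mul_decayWeight_pow_le (hf : InER R f) :
    ∃ (k : ℕ) (D : ℝ≥0∞), D ≠ ∞ ∧ ∀ x, ‖f x‖ₑ * decayWeight x ^ k ≤ D := by
  obtain ⟨-, ⟨C, k, hC⟩, -⟩ := hf
  refine ⟨k, ENNReal.ofReal C, ENNReal.ofReal_ne_top, fun x => ?_⟩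
  rw [decayWeight_eq_ofReal, ← ofReal_norm, ← ENNReal.ofReal_pow (by positivity),
    ← ENNReal.ofReal_mul (by positivity), inv_pow, ← div_eq_mul_inv]
  exact ENNReal.ofReal_le_ofReal ((div_le_iff₀ (by positivity)).2 (hC x))

lemma integral_comp_add_div_mul_eq (hf : InER R f) (hK : ∀ v, |v| ≤ 2 → 𝓕⁻ (K : ℝ → ℂ) v = 1)
    (hRr : R ≤ r) (hr : 1 ≤ r) {r' : ℝ} (hrr' : r ≤ r') (x : ℝ) :
    ∫ u, f (x + u / r') * K u = ∫ u, f (x + u / r) * K u := by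
  have hr₀ : 0 < r := one_pos.trans_le hr
  have hr'₀ : 0 < r' := hr₀.trans_le hrr'
  obtain ⟨L, hL⟩ := exists_schwartz_eq_mul_comp_mul_sub hr₀.ne' K x
  obtain ⟨L', hL'⟩ := exists_schwartz_eq_mul_comp_mul_sub hr'₀.ne' K x
  obtain ⟨k, D, hD, hgrowth⟩ := hf.exists_enorm_mul_decayWeight_pow_le
  have hint := integrable_comp_add_div_mul_schwartz hf.1 hgrowth hD hr K x
  have hint' := integrable_comp_add_div_mul_schwartz hf.1 hgrowth hD (hr.trans hrr') K x
  have horth := hf.2.2 _ (disjoint_tsupport_fourierInv_sub_Icc hK hr₀ hrr' (by linarith) hL hL')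
  rw [← fourier_coe, FourierTransform.fourier_fourierInv_eq] at horth
  simp only [sub_apply, hL, hL', mul_sub (f _)] at horth
  rw [integral_sub (integrable_mul_comp_mul_sub hr'₀ hint') (integrable_mul_comp_mul_sub hr₀ hint),
    integral_mul_comp_mul_sub hr'₀, integral_mul_comp_mul_sub hr₀] at horth
  exact sub_eq_zero.1 horth

lemma eq_integral_mul_schwartz (hf : InER R f) (hK : ∀ v, |v| ≤ 2 → 𝓕⁻ (K : ℝ → ℂ) v = 1)
    (hRr : R ≤ r) (hr : 1 ≤ r) (x : ℝ) : f x = ∫ u, f (x + u / r) * K u := by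
  obtain ⟨k, D, hD, hgrowth⟩ := hf.exists_enorm_mul_decayWeight_pow_le
  have hK_integral : ∫ u, K u = 1 := by simpa [Real.fourierInv_eq'] using hK 0 (by simp)
  have hlim := tendsto_integral_comp_add_div_mul_schwartz hf.1 hgrowth hD K x
  rw [hK_integral, mul_one] at hlim
  refine tendsto_nhds_unique hlim (tendsto_const_nhds.congr' ?_)
  filter_upwards [eventually_ge_atTop r] with r' hrr'
  exact (hf.integral_comp_add_div_mul_eq hK hRr hr hrr' x).symm

end InER

lemma exists_one_lt_div_ofReal {p : ℝ≥0∞} (hp : 0 < p) :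
    ∃ s : ℝ, 0 < s ∧ s ≤ 1 ∧ 1 < p / ENNReal.ofReal s := by
  obtain ⟨s, hs, hsp⟩ := ENNReal.lt_iff_exists_nnreal_btwn.1 (lt_min one_pos hp)
  rw [lt_min_iff] at hsp
  have hs' : (s : ℝ≥0∞) ≠ 0 := hs.ne'
  refine ⟨s, by exact_mod_cast hs, by exact_mod_cast hsp.1.le, ?_⟩
  rw [ENNReal.ofReal_coe_nnreal, ENNReal.lt_div_iff_mul_lt (.inl hs') (.inl (by simp)), one_mul]
  exact hsp.2

section DecayKernel

variable {B : ℝ≥0∞} {N : ℕ} {r s : ℝ}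

lemma iSup_enorm_mul_decayWeight_pow_ne_top {f : ℝ → ℂ} {D : ℝ≥0∞} {k : ℕ} (hD : D ≠ ∞)
    (hf : ∀ x, ‖f x‖ₑ * decayWeight x ^ k ≤ D) (hkN : k ≤ N) (hr : 1 ≤ r) (x : ℝ) :
    ⨆ y, ‖f y‖ₑ * decayWeight (r * (y - x)) ^ N ≠ ∞ := by
  refine ne_top_of_le_ne_top (b := D * (1 + ‖x‖ₑ) ^ k) (by finiteness) (iSup_le fun y => ?_)
  calc ‖f y‖ₑ * decayWeight (r * (y - x)) ^ N ≤ ‖f y‖ₑ * decayWeight (r * (y - x)) ^ k :=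
        mul_le_mul_right (pow_le_pow_right_of_le_one' (decayWeight_le_one _) hkN) _
    _ ≤ D * (1 + ‖x‖ₑ) ^ k := by
        have hr₀ : r ≠ 0 := (one_pos.trans_le hr).ne'
        simpa only [mul_div_cancel_left₀ _ hr₀, add_sub_cancel] using
          enorm_comp_add_div_mul_decayWeight_pow_le hf hr x (r * (y - x))

lemma rpow_le_lintegral_rpow_mul_decayWeight_sq {G : ℝ → ℝ≥0∞} (hs : 0 < s) (hs1 : s ≤ 1)
    (hN : 2 ≤ N * s) (hG : ∀ x, G x ≤ B * ∫⁻ z, G z * decayWeight (r * (z - x)) ^ N)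
    {x : ℝ} (hfin : ⨆ y, G y * decayWeight (r * (y - x)) ^ N ≠ ∞) :
    G x ^ s ≤ B * ∫⁻ z, G z ^ s * decayWeight (r * (z - x)) ^ 2 := by
  have hsubmul (x y z : ℝ) : decayWeight (r * (z - y)) ^ N * decayWeight (r * (y - x)) ^ N ≤
      decayWeight (r * (z - x)) ^ N := by
    rw [← mul_pow]
    gcongr
    refine (decayWeight_mul_decayWeight_le _ _).trans_eq ?_
    rw [← mul_add, sub_add_sub_cancel]
  refine (rpow_le_lintegral_rpow_of_le_lintegral (w := fun z y => decayWeight (r * (z - y)) ^ N)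
    hs hs1 hsubmul (by simp [decayWeight_zero]) hG hfin).trans ?_
  refine mul_le_mul_right (lintegral_mono fun z => ?_) _
  rw [ENNReal.mul_rpow_of_nonneg _ _ hs.le, ← ENNReal.rpow_natCast, ← ENNReal.rpow_mul,
    ← ENNReal.rpow_ofNat]
  exact mul_le_mul_right (ENNReal.rpow_le_rpow_of_exponent_ge (decayWeight_le_one _) hN) _

lemma exists_lorentzNorm_int_le_of_le_lintegral_decayWeight {p q : ℝ≥0∞}
    (hp : 1 < p) (hp' : p ≠ ∞) (hq : q ≠ 0) (hB : B ≠ ∞) :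
    ∃ C : ℝ≥0∞, C ≠ ∞ ∧ ∀ {h : ℝ → ℝ≥0∞} {a : ℤ → ℝ≥0∞} {r : ℝ}, Measurable h → 1 ≤ r →
      (∀ n, a n ≤ B * ENNReal.ofReal r * ∫⁻ z, h z * decayWeight (r * (z - n)) ^ 2) →
      lorentzNorm Measure.count p q a ≤
        C * ENNReal.ofReal r ^ (1 / p.toReal) * lorentzNorm volume p q h := by
  obtain ⟨C, hC, hkernel⟩ := exists_lorentzNorm_le_of_le_lintegral_kernel
    (X := ℝ) (Y := ℤ) (μ := volume) (ν := Measure.count) hp hp' hq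
  set c := ∫⁻ u : ℝ, decayWeight u ^ 2
  set c' := 4 * ∑' n : ℤ, decayWeight (n : ℝ) ^ 2
  have hBc : B * c ≠ ∞ := ENNReal.mul_ne_top hB lintegral_decayWeight_sq_ne_top
  have hc' : c' ≠ ∞ := ENNReal.mul_ne_top ENNReal.ofNat_ne_top tsum_int_decayWeight_sq_ne_top
  obtain ⟨M, hM, hBcM⟩ : ∃ M : ℝ, 0 < M ∧ B * c ≤ ENNReal.ofReal M :=
    ⟨(B * c).toReal + 1, by positivity,
      (ENNReal.le_ofReal_iff_toReal_le hBc (by positivity)).2 (by linarith)⟩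
  have hM_ne : ENNReal.ofReal M ≠ 0 := (ENNReal.ofReal_pos.2 hM).ne'
  refine ⟨C * (2 * (B * c') / ENNReal.ofReal M) ^ (1 / p.toReal) * ENNReal.ofReal (2 * M),
    by finiteness, fun {h a r} hh hr ha => ?_⟩
  have hr₀ : 0 < r := one_pos.trans_le hr
  let k : ℤ → ℝ → ℝ≥0∞ := fun n z => B * ENNReal.ofReal r * decayWeight (r * (z - n)) ^ 2
  have hk : Measurable (Function.uncurry k) := by
    have := measurable_decayWeight (E := ℝ)
    fun_prop
  have hk_int (n : ℤ) : ∫⁻ z, k n z ≤ ENNReal.ofReal M := by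
    rwa [lintegral_const_mul' _ _ (by finiteness), mul_assoc,
      ofReal_mul_lintegral_decayWeight_sq hr₀]
  have hk_sum (z : ℝ) : ∫⁻ n, k n z ∂Measure.count ≤ B * ENNReal.ofReal r * c' := by
    rw [lintegral_count, ENNReal.tsum_mul_left]
    gcongr
    exact tsum_decayWeight_sub_int_sq_le hr z
  have ha_k (n : ℤ) : a n ≤ ∫⁻ z, h z * k n z := by
    refine (ha n).trans_eq ?_
    rw [← lintegral_const_mul' _ _ (by finiteness)]
    exact lintegral_congr fun z => mul_left_comm _ _ _
  refine (hkernel k h a _ M hk hh hM (by finiteness) hk_int hk_sum ha_k).trans_eq ?_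
  rw [show 2 * (B * ENNReal.ofReal r * c') / ENNReal.ofReal M =
    2 * (B * c') / ENNReal.ofReal M * ENNReal.ofReal r by simp only [div_eq_mul_inv]; ring,
    ENNReal.mul_rpow_of_nonneg _ _ (by positivity)]
  ring

end DecayKernel

namespace InER

variable {f : ℝ → ℂ} {R s : ℝ} {p q : ℝ≥0∞}

lemma exists_enorm_le_lintegral_decayWeight (N : ℕ) :
    ∃ B : ℝ≥0∞, B ≠ ∞ ∧ ∀ {f : ℝ → ℂ} {R r : ℝ}, InER R f → R ≤ r → 1 ≤ r → ∀ x,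
      ‖f x‖ₑ ≤ B * ENNReal.ofReal r * ∫⁻ z, ‖f z‖ₑ * decayWeight (r * (z - x)) ^ N := by
  obtain ⟨K, hK⟩ := exists_schwartz_fourierInv_eq_one 2
  obtain ⟨B, hB, hKB⟩ := exists_enorm_schwartz_le_decayWeight_pow K N
  refine ⟨B, hB, fun {f R r} hf hRr hr x => ?_⟩
  have hr₀ : 0 < r := one_pos.trans_le hr
  calc ‖f x‖ₑ = ‖∫ y, f y * (r * K (r * (y - x)))‖ₑ := by
        rw [integral_mul_comp_mul_sub hr₀, ← hf.eq_integral_mul_schwartz hK hRr hr x]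
    _ ≤ ∫⁻ y, ‖f y * (r * K (r * (y - x)))‖ₑ := enorm_integral_le_lintegral_enorm _
    _ ≤ ∫⁻ y, B * ENNReal.ofReal r * (‖f y‖ₑ * decayWeight (r * (y - x)) ^ N) := by
        refine lintegral_mono fun y => ?_
        calc ‖f y * (r * K (r * (y - x)))‖ₑ
            = ‖f y‖ₑ * (ENNReal.ofReal r * ‖K (r * (y - x))‖ₑ) := by
              rw [enorm_mul, enorm_mul, ← ofReal_norm (r : ℂ), norm_real, ofReal_norm,
                Real.enorm_eq_ofReal hr₀.le]
          _ ≤ ‖f y‖ₑ * (ENNReal.ofReal r * (B * decayWeight (r * (y - x)) ^ N)) := by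
              gcongr
              exact hKB _
          _ = _ := by ring
    _ = _ := lintegral_const_mul' _ _ (by finiteness)

lemma iSup_enorm_ne_top (hp : 0 < p) (hp' : p ≠ ∞) (hq : q ≠ 0) (hf : InER R f)
    (hnorm : lorentzNormC volume p q f ≠ ∞) : ⨆ x, ‖f x‖ₑ ≠ ∞ := by
  obtain ⟨s, hs, hs1, hsp⟩ := exists_one_lt_div_ofReal hp
  obtain ⟨k, D, hD, hgrowth⟩ := hf.exists_enorm_mul_decayWeight_pow_le
  obtain ⟨N, hN⟩ := exists_nat_ge (max (k : ℝ) (2 / s))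
  have hkN : k ≤ N := Nat.cast_le.1 ((le_max_left _ _).trans hN)
  have hNs : 2 ≤ N * s := (div_le_iff₀ hs).1 ((le_max_right _ _).trans hN)
  obtain ⟨B, hB, hrepr⟩ := exists_enorm_le_lintegral_decayWeight N
  have hr : 1 ≤ max 1 R := le_max_left 1 R
  have hfin := iSup_enorm_mul_decayWeight_pow_ne_top hD hgrowth hkN hr
  have hle (x : ℝ) := rpow_le_lintegral_rpow_mul_decayWeight_sq hs hs1 hNs
    (hrepr hf (le_max_right 1 R) hr) (hfin x)
  have hbounded : ⨆ x, ‖f x‖ₑ ^ s ≠ ∞ := by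
    refine iSup_ne_top_of_le_lintegral_kernel (q := q / ENNReal.ofReal s) hsp
      (ENNReal.div_ne_top hp' (by simpa using hs))
      (ENNReal.div_ne_zero.2 ⟨hq, ENNReal.ofReal_ne_top⟩)
      (hf.1.enorm.measurable.pow_const s) ?_
      (ENNReal.mul_ne_top hB ENNReal.ofReal_ne_top) lintegral_decayWeight_sq_ne_top
      (fun _ _ => pow_le_one' (decayWeight_le_one _) 2) (fun x => ?_) hle
    · rw [lorentzNorm_rpow _ _ hq hs]
      exact ENNReal.rpow_ne_top_of_nonneg hs.le hnorm
    · rw [← lintegral_sub_right_eq_self (fun u : ℝ => decayWeight u ^ 2) x]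
      gcongr with z
      exact decayWeight_mul_le hr _
  rwa [← ennreal_iSup_rpow hs.le, Ne, ENNReal.rpow_eq_top_iff_of_pos hs] at hbounded

-- Boundedness of `f` is what makes the decay exponent `N`, hence `B`, independent of the growth
-- of `f`.
lemma exists_enorm_rpow_le_lintegral (hp : 0 < p) (hp' : p ≠ ∞) (hq : q ≠ 0) (hs : 0 < s)
    (hs1 : s ≤ 1) :
    ∃ B : ℝ≥0∞, B ≠ ∞ ∧ ∀ {f : ℝ → ℂ} {R r : ℝ}, InER R f → R ≤ r → 1 ≤ r →
      lorentzNormC volume p q f ≠ ∞ → ∀ x, ‖f x‖ₑ ^ s ≤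
        B * ENNReal.ofReal r * ∫⁻ z, ‖f z‖ₑ ^ s * decayWeight (r * (z - x)) ^ 2 := by
  obtain ⟨N, hN⟩ := exists_nat_ge (2 / s)
  obtain ⟨B, hB, hrepr⟩ := exists_enorm_le_lintegral_decayWeight N
  refine ⟨B, hB, fun {f R r} hf hRr hr hnorm x => ?_⟩
  refine rpow_le_lintegral_rpow_mul_decayWeight_sq hs hs1 ((div_le_iff₀ hs).1 hN)
    (hrepr hf hRr hr) (ne_top_of_le_ne_top (hf.iSup_enorm_ne_top hp hp' hq hnorm) ?_)
  exact iSup_mono fun y => mul_le_of_le_one_right' (pow_le_one' (decayWeight_le_one _) N)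

lemma exists_lorentzNormC_int_le (hp : 0 < p) (hp' : p ≠ ∞) (hq : q ≠ 0) :
    ∃ C : ℝ≥0∞, C ≠ ∞ ∧ ∀ {f : ℝ → ℂ} {R r : ℝ}, InER R f → R ≤ r → 1 ≤ r →
      lorentzNormC volume p q f ≠ ∞ →
      lorentzNormC Measure.count p q (fun n : ℤ => f n) ≤
        C * ENNReal.ofReal r ^ (1 / p.toReal) * lorentzNormC volume p q f := by
  obtain ⟨s, hs, hs1, hsp⟩ := exists_one_lt_div_ofReal hp
  obtain ⟨B, hB, hpointwise⟩ := exists_enorm_rpow_le_lintegral hp hp' hq hs hs1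
  obtain ⟨C, hC, hkernel⟩ := exists_lorentzNorm_int_le_of_le_lintegral_decayWeight
    (q := q / ENNReal.ofReal s) hsp (ENNReal.div_ne_top hp' (by simpa using hs))
    (ENNReal.div_ne_zero.2 ⟨hq, ENNReal.ofReal_ne_top⟩) hB
  refine ⟨C ^ (1 / s), by finiteness, fun {f R r} hf hRr hr hnorm => ?_⟩
  have hrpow := hkernel (hf.1.enorm.measurable.pow_const s) hr
    fun n : ℤ => hpointwise hf hRr hr hnorm n
  rw [lorentzNorm_rpow volume _ hq hs, lorentzNorm_rpow Measure.count (fun n : ℤ => ‖f n‖ₑ) hq hs]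
    at hrpow
  rw [← ENNReal.rpow_le_rpow_iff hs]
  refine hrpow.trans_eq ?_
  have hexp : 1 / p.toReal * s = 1 / (p / ENNReal.ofReal s).toReal := by
    rw [toReal_div_ofReal p hs.le, one_div_div, one_div_mul_eq_div]
  rw [ENNReal.mul_rpow_of_nonneg _ _ hs.le, ENNReal.mul_rpow_of_nonneg _ _ hs.le,
    ← ENNReal.rpow_mul, ← ENNReal.rpow_mul, one_div_mul_cancel hs.ne', ENNReal.rpow_one, hexp]
  rfl

end InER

lemma max_one_rpow_one_div_toReal_le {p q : ℝ≥0∞} {R : ℝ} (hR : 0 ≤ R) (hp : 0 < p) (hpq : p < q) :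
    max 1 R ^ (1 / q.toReal) ≤ max 1 (R ^ (1 / p.toReal)) := by
  have hexp : 1 / q.toReal ≤ 1 / p.toReal := by
    rcases eq_or_ne q ∞ with rfl | hq
    · simp
    · exact one_div_le_one_div_of_le (ENNReal.toReal_pos hp.ne' hpq.ne_top)
        (ENNReal.toReal_mono hq hpq.le)
  calc max 1 R ^ (1 / q.toReal) ≤ max 1 R ^ (1 / p.toReal) :=
        Real.rpow_le_rpow_of_exponent_le (le_max_left 1 R) hexp
    _ = max 1 (R ^ (1 / p.toReal)) := by
        rw [(Real.monotoneOn_rpow_Ici_of_exponent_nonneg (by positivity)).map_max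
          (Set.mem_Ici.2 zero_le_one) hR, Real.one_rpow]

theorem stmt3_general (p q : ℝ≥0∞) (hp : 0 < p) (hq : 0 < q) :
    ∃ C : ℝ, 0 < C ∧ ∀ (R : ℝ) (f : ℝ → ℂ), InER R f →
      lorentzNormC Measure.count p q (fun n : ℤ => f n) ≤
        ENNReal.ofReal (C * max 1 R ^ (1 / p.toReal)) * lorentzNormC volume p q f := by
  have hpos {C R : ℝ} (hC : 0 < C) : ENNReal.ofReal (C * max 1 R ^ (1 / p.toReal)) ≠ 0 := by
    rw [ENNReal.ofReal_ne_zero_iff]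
    positivity
  rcases eq_or_ne p ∞ with rfl | hp'
  · refine ⟨1, one_pos, fun R f _ => ?_⟩
    rw [show lorentzNormC volume ∞ q f = ∞ from lorentzGauge_top_left hq.ne' _,
      ENNReal.mul_top (hpos one_pos)]
    exact le_top
  obtain ⟨C, hC, hle⟩ := InER.exists_lorentzNormC_int_le hp hp' hq.ne'
  have hC₁ : 0 < C.toReal + 1 := by positivity
  refine ⟨C.toReal + 1, hC₁, fun R f hf => ?_⟩
  rcases eq_or_ne (lorentzNormC volume p q f) ∞ with hnorm | hnorm
  · rw [hnorm, ENNReal.mul_top (hpos hC₁)]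
    exact le_top
  refine (hle hf (le_max_right 1 R) (le_max_left 1 R) hnorm).trans ?_
  rw [ENNReal.ofReal_mul hC₁.le, ← ENNReal.ofReal_rpow_of_pos (by positivity)]
  gcongr
  exact (ENNReal.le_ofReal_iff_toReal_le hC hC₁.le).2 (by linarith)

/-- Restriction lemma: for `f ∈ E_R` with finite Lorentz norm, the restriction of `f` to `ℤ`
lies in `ℓ^{p,q}(ℤ)` with norm at most `C · max(1, R^{1/p₀})` times the Lorentz norm of `f`. -/
theorem stmt3 (p q p₀ : ℝ≥0∞) (hq : 0 < q) (hp₀ : 0 < p₀) (h₀ : p₀ < p) :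
    ∃ C : ℝ, 0 < C ∧ ∀ R : ℝ, 0 < R → ∀ f : ℝ → ℂ, InER R f →
      lorentzNormC volume p q f < ∞ →
      lorentzNormC Measure.count p q (fun n : ℤ => f n) < ∞ ∧
      lorentzNormC Measure.count p q (fun n : ℤ => f n) ≤
        ENNReal.ofReal (C * max 1 (R ^ (1 / p₀.toReal))) * lorentzNormC volume p q f := by
  obtain ⟨C, hC, hle⟩ := stmt3_general p q (hp₀.trans h₀) hq
  refine ⟨C, hC, fun R hR f hf hnorm => ?_⟩
  have hbound := (hle R f hf).trans <| mul_le_mul_left (ENNReal.ofReal_le_ofReal <|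
    mul_le_mul_of_nonneg_left (max_one_rpow_one_div_toReal_le hR.le hp₀ h₀) hC.le) _
  exact ⟨hbound.trans_lt (ENNReal.mul_lt_top ENNReal.ofReal_lt_top hnorm), hbound⟩
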